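/- Let A be a line arrangement in ℙ²(ℂ) with |A| ≥ 2. Then there exists a supersolvable line arrangement B with A ⊆ B and |B| ≤ |A| + |Sing(A)|, where Sing(A) is the (finite) set of singular points of A. Consequently extSS(A) is well-defined and extSS(A) ≤ |Sing(A)|. (Such a B may be obtained by choosing a sufficiently general point P and adjoining to A all lines joining P to the singular points of A; then P is a modular point of B.) -/

import Mathlib

/-!
Instead of a general point, take for `P` any singular point of `A` (two lines of `A` meet, so one
exists), and let `B` be `A` together with the lines `PQ` for `Q ∈ Sing A`, `Q ≠ P`. If `R` is a
point other than `P` on two lines of `B`, then either one of these lines passes through `P`, and it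
is the line `PR`; or both belong to `A`, so `R ∈ Sing A` and `PR` was adjoined. Hence `P` is modular
in `B`, and at most `|Sing A|` lines were adjoined.

The plane geometry used is that two distinct points are joined by a line and two distinct lines meet
in exactly one point; it comes from Mathlib's `Projectivization.cross` and
`Configuration.ofField.eq_or_eq_of_orthogonal`. Uniqueness of the meeting point also gives the
finiteness of `Sing A`, without which `(Sing A).ncard` would be the junk value `0`.
-/

open scoped Classical

noncomputable section

/-- The projective plane `ℙ²(ℂ)`, used both for points and for lines
(a line being recorded by its coefficient vector, up to scalar). -/
abbrev P2 := Projectivization ℂ (Fin 3 → ℂ)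

lemma vne₀ {a b c : ℂ} (h : a ≠ 0) : ![a, b, c] ≠ 0 :=
  fun hh => h (by simpa using congrFun hh 0)

lemma vne₁ {a b c : ℂ} (h : b ≠ 0) : ![a, b, c] ≠ 0 :=
  fun hh => h (by simpa using congrFun hh 1)

lemma vne₂ {a b c : ℂ} (h : c ≠ 0) : ![a, b, c] ≠ 0 :=
  fun hh => h (by simpa using congrFun hh 2)

/-- The point (or line) of `ℙ²(ℂ)` with homogeneous coordinates `[a : b : c]`. -/
def mkP (a b c : ℂ) (h : ![a, b, c] ≠ 0) : P2 := Projectivization.mk ℂ ![a, b, c] h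

/-- Incidence: the point `p` lies on the line `L`
(the line being given by its coefficient vector, up to scalar). -/
def Incid (p L : P2) : Prop := ∑ i : Fin 3, p.rep i * L.rep i = 0

/-- The multiplicity of a point `p` with respect to the line arrangement `A`:
the number of lines of `A` passing through `p`. -/
def mult (A : Finset P2) (p : P2) : ℕ := (A.filter fun L => Incid p L).card

/-- `p` is a singular point of the arrangement `A`: it lies on at least two of its lines. -/
def IsSing (A : Finset P2) (p : P2) : Prop := 2 ≤ mult A p

/-- The set of singular points of `A`. -/
def Sing (A : Finset P2) : Set P2 := {p | IsSing A p}

/-- `tr A r` is the number of singular points of `A` of multiplicity exactly `r`. -/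
def tr (A : Finset P2) (r : ℕ) : ℕ := {p : P2 | mult A p = r}.ncard

/-- `P` is a modular point of `A`: it is a singular point, and for every singular point
`Q ≠ P` the line through `P` and `Q` belongs to `A`. -/
def IsModular (A : Finset P2) (P : P2) : Prop :=
  IsSing A P ∧ ∀ Q : P2, IsSing A Q → Q ≠ P → ∃ L ∈ A, Incid P L ∧ Incid Q L

/-- A line arrangement in `ℙ²(ℂ)` is supersolvable iff it has a modular point. -/
def Supersolvable (A : Finset P2) : Prop := ∃ P : P2, IsModular A P

/-- The extension-to-supersolvability number: the least `k` such that `A` is contained in a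
supersolvable arrangement with `|A| + k` lines. -/
def extSS (A : Finset P2) : ℕ :=
  sInf {k : ℕ | ∃ B : Finset P2, A ⊆ B ∧ Supersolvable B ∧ B.card = A.card + k}

/-- `Incid`, defined by chosen representatives, is Mathlib's orthogonality relation. -/
lemma incid_iff_orthogonal (p L : P2) : Incid p L ↔ p.orthogonal L := by
  conv_rhs => rw [← p.mk_rep, ← L.mk_rep]
  rw [Projectivization.orthogonal_mk]
  rfl

lemma isSing_iff (A : Finset P2) (p : P2) :
    IsSing A p ↔ ∃ L ∈ A, ∃ M ∈ A, L ≠ M ∧ Incid p L ∧ Incid p M := by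
  unfold IsSing mult
  rw [← Nat.lt_iff_add_one_le, Finset.one_lt_card]
  simp only [Finset.mem_filter]
  constructor
  · rintro ⟨L, ⟨hL, hpL⟩, M, ⟨hM, hpM⟩, h⟩
    exact ⟨L, hL, M, hM, h, hpL, hpM⟩
  · rintro ⟨L, hL, M, hM, h, hpL, hpM⟩
    exact ⟨L, ⟨hL, hpL⟩, M, ⟨hM, hpM⟩, h⟩

/-- Every singular point is the intersection point `L × M` of two lines of `A`. -/
lemma sing_finite (A : Finset P2) : (Sing A).Finite := by
  refine ((A ×ˢ A).image fun x => Projectivization.cross x.1 x.2).finite_toSet.subset ?_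
  intro p hp
  obtain ⟨L, hL, M, hM, hne, hpL, hpM⟩ := (isSing_iff A p).1 hp
  rw [incid_iff_orthogonal] at hpL hpM
  have h := (Configuration.ofField.eq_or_eq_of_orthogonal hpL
    (Projectivization.cross_orthogonal_left hne) hpM
    (Projectivization.cross_orthogonal_right hne)).resolve_right hne
  rw [Finset.mem_coe, Finset.mem_image]
  exact ⟨(L, M), Finset.mk_mem_product hL hM, h.symm⟩

lemma exists_isSing (A : Finset P2) (hA : 2 ≤ A.card) : ∃ p, IsSing A p := by
  obtain ⟨L, hL, M, hM, hne⟩ := Finset.one_lt_card.1 hA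
  refine ⟨Projectivization.cross L M, (isSing_iff _ _).2 ⟨L, hL, M, hM, hne, ?_, ?_⟩⟩
  · exact (incid_iff_orthogonal _ _).2 (Projectivization.cross_orthogonal_left hne)
  · exact (incid_iff_orthogonal _ _).2 (Projectivization.cross_orthogonal_right hne)

lemma exists_supersolvable_extension (A : Finset P2) (hA : 2 ≤ A.card) :
    ∃ B : Finset P2, A ⊆ B ∧ Supersolvable B ∧ B.card ≤ A.card + (Sing A).ncard := by
  obtain ⟨P, hP⟩ := exists_isSing A hA
  -- `Q = P` is left out because `cross P P` is the junk value `P`, which need not pass through `P`.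
  let S : Finset P2 := (sing_finite A).toFinset.erase P
  let N : Finset P2 := S.image (Projectivization.cross P)
  have hN : ∀ L ∈ N, Incid P L := by
    intro L hL
    obtain ⟨Q, hQ, rfl⟩ := Finset.mem_image.1 hL
    exact (incid_iff_orthogonal _ _).2
      (Projectivization.orthogonal_cross_left (Finset.ne_of_mem_erase hQ).symm)
  refine ⟨A ∪ N, Finset.subset_union_left, ⟨P, ?_, ?_⟩, ?_⟩
  · obtain ⟨L, hL, M, hM, h⟩ := (isSing_iff A P).1 hP
    exact (isSing_iff _ P).2
      ⟨L, Finset.mem_union_left _ hL, M, Finset.mem_union_left _ hM, h⟩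
  · intro R hR hRP
    obtain ⟨L, hL, M, hM, hne, hRL, hRM⟩ := (isSing_iff _ R).1 hR
    rcases Finset.mem_union.1 hL with hLA | hLN
    · rcases Finset.mem_union.1 hM with hMA | hMN
      · have hRA : IsSing A R := (isSing_iff A R).2 ⟨L, hLA, M, hMA, hne, hRL, hRM⟩
        have hRS : R ∈ S := Finset.mem_erase.2 ⟨hRP, (sing_finite A).mem_toFinset.2 hRA⟩
        have hmem : Projectivization.cross P R ∈ N := Finset.mem_image_of_mem _ hRS
        exact ⟨_, Finset.mem_union_right _ hmem, hN _ hmem,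
          (incid_iff_orthogonal _ _).2 (Projectivization.orthogonal_cross_right hRP.symm)⟩
      · exact ⟨M, hM, hN M hMN, hRM⟩
    · exact ⟨L, hL, hN L hLN, hRL⟩
  · calc (A ∪ N).card ≤ A.card + N.card := Finset.card_union_le _ _
      _ ≤ A.card + (sing_finite A).toFinset.card := by
          refine Nat.add_le_add_left ?_ _
          exact Finset.card_image_le.trans (Finset.card_le_card (Finset.erase_subset _ _))
      _ = A.card + (Sing A).ncard := by rw [Set.ncard_eq_toFinset_card _ (sing_finite A)]

/-- Every line arrangement `A` in `ℙ²(ℂ)` with at least `2` lines is contained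
in a supersolvable arrangement `B` with `|B| ≤ |A| + |Sing(A)|`; consequently `extSS(A)` is
well-defined and `extSS(A) ≤ |Sing(A)|`. -/
theorem stmt_14 (A : Finset P2) (hA : 2 ≤ A.card) :
    (∃ B : Finset P2, A ⊆ B ∧ Supersolvable B ∧ B.card ≤ A.card + (Sing A).ncard) ∧
    extSS A ≤ (Sing A).ncard := by
  obtain ⟨B, hAB, hB, hcard⟩ := exists_supersolvable_extension A hA
  refine ⟨⟨B, hAB, hB, hcard⟩, ?_⟩
  have hle : A.card ≤ B.card := Finset.card_le_card hAB
  have hmin : extSS A ≤ B.card - A.card := Nat.sInf_le ⟨B, hAB, hB, by omega⟩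
  omega
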